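/- Let ω, R > 0 and set R_g := R − tanh(ω·R)/ω. Define Ψ : (0,∞) → ℝ by Ψ(r) = sinh(ω·r)/(ω·r·cosh(ω·R)) for 0 < r ≤ R and Ψ(r) = 1 − R_g/r for r > R. Then: (i) Ψ is continuously differentiable on (0,∞); (ii) Ψ(r) > 0 for all r > 0; (iii) the function χ(r) := r·Ψ(r) satisfies χ''(r) = ω²·χ(r) for 0 < r < R and χ''(r) = 0 for r > R; (iv) Ψ(r) → 1 as r → ∞ and Ψ(r) → 1/cosh(ω·R) as r → 0⁺. -/

import Mathlib

open Real Filter Topology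

/-!
The function `χ(r) = r Ψ(r)` is the interior profile `sinh(ωr) / (ω cosh(ωR))`, extended beyond the
star radius `R` along its tangent line at `R`. The factor `cosh(ωR)` normalizes the slope of that
line to `1`, and `R_g` is the point where the line meets the axis. Hence `χ` is `C¹`, with
derivative `cosh(ω min(r, R)) / cosh(ωR)`, and the properties of `Ψ = χ / r` can be read off.
-/

section TangentExtension

variable {E : Type*} [NormedAddCommGroup E] [NormedSpace ℝ E] {f : ℝ → E} {a x : ℝ}

/-- The extension of a curve `f` beyond `a` along its tangent line at `a`. The tangent direction is
`deriv f a`, so the line is constant when `f` is not differentiable at `a`. -/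
noncomputable def tangentExtension (f : ℝ → E) (a x : ℝ) : E :=
  if x ≤ a then f x else f a + (x - a) • deriv f a

theorem tangentExtension_of_le (hx : x ≤ a) : tangentExtension f a x = f x :=
  if_pos hx

theorem tangentExtension_of_ge (hx : a ≤ x) :
    tangentExtension f a x = f a + (x - a) • deriv f a := by
  rcases hx.eq_or_lt with rfl | hlt
  · simp [tangentExtension]
  · exact if_neg hlt.not_ge

theorem tangentExtension_eventuallyEq_of_lt (hx : x < a) : tangentExtension f a =ᶠ[𝓝 x] f := by
  filter_upwards [Iio_mem_nhds hx] with y hy using tangentExtension_of_le (le_of_lt hy)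

theorem tangentExtension_eventuallyEq_of_gt (hx : a < x) :
    tangentExtension f a =ᶠ[𝓝 x] fun y ↦ f a + (y - a) • deriv f a := by
  filter_upwards [Ioi_mem_nhds hx] with y hy using tangentExtension_of_ge (le_of_lt hy)

theorem hasDerivAt_add_sub_smul_const (p v : E) (a x : ℝ) :
    HasDerivAt (fun y : ℝ ↦ p + (y - a) • v) v x := by
  simpa using (((hasDerivAt_id x).sub_const a).smul_const v).const_add p

theorem hasDerivAt_tangentExtension (hf : DifferentiableAt ℝ f (min x a)) :
    HasDerivAt (tangentExtension f a) (deriv f (min x a)) x := by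
  rcases lt_trichotomy x a with hlt | rfl | hgt
  · rw [min_eq_left hlt.le] at hf ⊢
    exact hf.hasDerivAt.congr_of_eventuallyEq (tangentExtension_eventuallyEq_of_lt hlt)
  · rw [min_self] at hf ⊢
    have hleft : HasDerivWithinAt (tangentExtension f x) (deriv f x) (Set.Iic x) x :=
      hf.hasDerivAt.hasDerivWithinAt.congr (fun _ hy ↦ tangentExtension_of_le hy)
        (tangentExtension_of_le le_rfl)
    have hright : HasDerivWithinAt (tangentExtension f x) (deriv f x) (Set.Ici x) x :=
      (hasDerivAt_add_sub_smul_const _ _ x x).hasDerivWithinAt.congr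
        (fun _ hy ↦ tangentExtension_of_ge hy) (tangentExtension_of_ge le_rfl)
    simpa only [Set.Iic_union_Ici, hasDerivWithinAt_univ] using hleft.union hright
  · rw [min_eq_right hgt.le]
    exact (hasDerivAt_add_sub_smul_const _ _ a x).congr_of_eventuallyEq
      (tangentExtension_eventuallyEq_of_gt hgt)

theorem contDiff_tangentExtension (hf : ContDiff ℝ 1 f) (a : ℝ) :
    ContDiff ℝ 1 (tangentExtension f a) := by
  obtain ⟨hdiff, hcont⟩ := contDiff_one_iff_deriv.mp hf
  have hderiv (x : ℝ) := hasDerivAt_tangentExtension (a := a) (hdiff (min x a))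
  refine contDiff_one_iff_deriv.mpr ⟨fun x ↦ (hderiv x).differentiableAt, ?_⟩
  rw [funext fun x ↦ (hderiv x).deriv]
  exact hcont.comp (continuous_id.min continuous_const)

theorem deriv_deriv_tangentExtension_of_lt (hx : x < a) :
    deriv (deriv (tangentExtension f a)) x = deriv (deriv f) x :=
  (tangentExtension_eventuallyEq_of_lt hx).deriv.deriv_eq

theorem deriv_deriv_tangentExtension_of_gt (hx : a < x) :
    deriv (deriv (tangentExtension f a)) x = 0 := by
  rw [(tangentExtension_eventuallyEq_of_gt hx).deriv.deriv_eq,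
    funext fun y ↦ (hasDerivAt_add_sub_smul_const (f a) (deriv f a) a y).deriv, deriv_const]

theorem tendsto_inv_smul_tangentExtension_atTop (f : ℝ → E) (a : ℝ) :
    Tendsto (fun x ↦ x⁻¹ • tangentExtension f a x) atTop (𝓝 (deriv f a)) := by
  have hlim : Tendsto (fun x : ℝ ↦ x⁻¹ • (f a - a • deriv f a) + deriv f a) atTop
      (𝓝 (deriv f a)) := by
    simpa using ((tendsto_inv_atTop_zero (𝕜 := ℝ)).smul_const (f a - a • deriv f a)).add_const
      (deriv f a)
  refine hlim.congr' ?_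
  filter_upwards [eventually_ge_atTop a, eventually_ne_atTop 0] with x hxa hx
  rw [tangentExtension_of_ge hxa, sub_smul, add_sub_left_comm, add_comm (x • _), smul_add,
    inv_smul_smul₀ hx]

end TangentExtension

section HomogeneousStar

variable {ω R r : ℝ}

/-- The interior solution for `χ(r) = r Ψ(r)` of the homogeneous star of radius `R`. -/
noncomputable def starInterior (ω R r : ℝ) : ℝ :=
  sinh (ω * r) / (ω * cosh (ω * R))

theorem contDiff_starInterior {n : WithTop ℕ∞} (ω R : ℝ) : ContDiff ℝ n (starInterior ω R) :=
  (contDiff_const.mul contDiff_id).sinh.div_const _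

theorem deriv_starInterior (hω : ω ≠ 0) (R r : ℝ) :
    deriv (starInterior ω R) r = cosh (ω * r) / cosh (ω * R) := by
  have h := ((hasDerivAt_const_mul ω (x := r)).sinh.div_const (ω * cosh (ω * R))).deriv
  rwa [mul_comm ω (cosh (ω * R)), mul_div_mul_right _ _ hω, mul_comm (cosh (ω * R))] at h

theorem deriv_deriv_starInterior (hω : ω ≠ 0) (R r : ℝ) :
    deriv (deriv (starInterior ω R)) r = ω ^ 2 * starInterior ω R r := by
  rw [funext (deriv_starInterior hω R),
    ((hasDerivAt_const_mul ω (x := r)).cosh.div_const (cosh (ω * R))).deriv, starInterior]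
  field_simp

theorem deriv_starInterior_radius (hω : ω ≠ 0) (R : ℝ) : deriv (starInterior ω R) R = 1 := by
  rw [deriv_starInterior hω, div_self (cosh_pos _).ne']

theorem starInterior_pos (hω : 0 < ω) (hr : 0 < r) : 0 < starInterior ω R r :=
  div_pos (sinh_pos_iff.mpr (mul_pos hω hr)) (mul_pos hω (cosh_pos _))

/-- The global solution for `χ(r) = r Ψ(r)`, inside and outside the star. -/
noncomputable def starSolution (ω R : ℝ) : ℝ → ℝ :=
  tangentExtension (starInterior ω R) R

theorem starSolution_of_ge (hω : ω ≠ 0) (hr : R ≤ r) :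
    starSolution ω R r = r - (R - tanh (ω * R) / ω) := by
  rw [starSolution, tangentExtension_of_ge hr, deriv_starInterior_radius hω, starInterior,
    tanh_eq_sinh_div_cosh, div_div, mul_comm ω (cosh (ω * R)), smul_eq_mul]
  ring

theorem inv_mul_starSolution_of_le (hr : r ≤ R) :
    r⁻¹ * starSolution ω R r = sinh (ω * r) / (ω * r * cosh (ω * R)) := by
  rw [starSolution, tangentExtension_of_le hr, starInterior, ← div_eq_inv_mul, div_div,
    mul_right_comm]

theorem inv_mul_starSolution_of_ge (hω : ω ≠ 0) (hr₀ : r ≠ 0) (hr : R ≤ r) :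
    r⁻¹ * starSolution ω R r = 1 - (R - tanh (ω * R) / ω) / r := by
  rw [starSolution_of_ge hω hr, ← div_eq_inv_mul, sub_div, div_self hr₀]

theorem starSolution_pos (hω : 0 < ω) (hR : 0 < R) (hr : 0 < r) : 0 < starSolution ω R r := by
  rcases le_total r R with hle | hge
  · rw [starSolution, tangentExtension_of_le hle]
    exact starInterior_pos hω hr
  · rw [starSolution, tangentExtension_of_ge hge, deriv_starInterior_radius hω.ne', smul_eq_mul,
      mul_one]
    exact add_pos_of_pos_of_nonneg (starInterior_pos hω hR) (sub_nonneg.mpr hge)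

theorem deriv_deriv_starSolution_of_lt (hω : ω ≠ 0) (hr : r < R) :
    deriv (deriv (starSolution ω R)) r = ω ^ 2 * starSolution ω R r := by
  rw [starSolution, deriv_deriv_tangentExtension_of_lt hr, deriv_deriv_starInterior hω,
    tangentExtension_of_le hr.le]

theorem tendsto_inv_mul_starSolution_atTop (hω : ω ≠ 0) (R : ℝ) :
    Tendsto (fun r ↦ r⁻¹ * starSolution ω R r) atTop (𝓝 1) := by
  simpa only [starSolution, deriv_starInterior_radius hω, smul_eq_mul] using
    tendsto_inv_smul_tangentExtension_atTop (starInterior ω R) R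

theorem tendsto_inv_mul_starSolution_zero (hω : ω ≠ 0) (hR : 0 < R) :
    Tendsto (fun r ↦ r⁻¹ * starSolution ω R r) (𝓝[>] 0) (𝓝 (1 / cosh (ω * R))) := by
  have hzero : starSolution ω R 0 = 0 := by
    simp [starSolution, tangentExtension_of_le hR.le, starInterior]
  have hderiv : HasDerivAt (starSolution ω R) (1 / cosh (ω * R)) 0 := by
    have h := hasDerivAt_tangentExtension (a := R) (x := 0)
      ((contDiff_starInterior (n := 1) ω R).differentiable one_ne_zero _)
    rwa [min_eq_left hR.le, deriv_starInterior hω, mul_zero, cosh_zero] at h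
  simpa only [zero_add, hzero, sub_zero, smul_eq_mul] using hderiv.tendsto_slope_zero_right

end HomogeneousStar

/-- The matched homogeneous-star solution:
with `R_g = R − tanh(ωR)/ω`, the function `Ψ` given by
`Ψ(r) = sinh(ωr)/(ωr·cosh(ωR))` for `0 < r ≤ R` and `Ψ(r) = 1 − R_g/r` for
`r > R` is (i) continuously differentiable on `(0,∞)`, (ii) positive,
(iii) `χ(r) := r·Ψ(r)` satisfies `χ'' = ω²χ` on `(0,R)` and `χ'' = 0` on
`(R,∞)`, and (iv) `Ψ(r) → 1` as `r → ∞` and `Ψ(r) → 1/cosh(ωR)` as `r → 0⁺`. -/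
theorem homogeneous_star_solution
    (ω R R_g : ℝ) (hω : 0 < ω) (hR : 0 < R)
    (hRg : R_g = R - Real.tanh (ω * R) / ω)
    (Ψ : ℝ → ℝ)
    (hin : ∀ r : ℝ, 0 < r → r ≤ R →
      Ψ r = Real.sinh (ω * r) / (ω * r * Real.cosh (ω * R)))
    (hout : ∀ r : ℝ, R < r → Ψ r = 1 - R_g / r) :
    ContDiffOn ℝ 1 Ψ (Set.Ioi 0) ∧
    (∀ r : ℝ, 0 < r → 0 < Ψ r) ∧
    (∀ r : ℝ, 0 < r → r < R →
      deriv (deriv (fun s => s * Ψ s)) r = ω ^ 2 * (r * Ψ r)) ∧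
    (∀ r : ℝ, R < r → deriv (deriv (fun s => s * Ψ s)) r = 0) ∧
    Tendsto Ψ atTop (𝓝 1) ∧
    Tendsto Ψ (𝓝[>] 0) (𝓝 (1 / Real.cosh (ω * R))) := by
  subst hRg
  have hω₀ := hω.ne'
  have hΨ : ∀ r, 0 < r → Ψ r = r⁻¹ * starSolution ω R r := by
    intro r hr
    rcases le_or_gt r R with hle | hgt
    · rw [hin r hr hle, inv_mul_starSolution_of_le hle]
    · rw [hout r hgt, inv_mul_starSolution_of_ge hω₀ hr.ne' hgt.le]
  have hmul : ∀ r, 0 < r → r * Ψ r = starSolution ω R r := fun r hr ↦ by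
    rw [hΨ r hr, mul_inv_cancel_left₀ hr.ne']
  have hderiv : ∀ r, 0 < r →
      deriv (deriv fun s ↦ s * Ψ s) r = deriv (deriv (starSolution ω R)) r := fun r hr ↦
    (eventuallyEq_of_mem (Ioi_mem_nhds hr) hmul).deriv.deriv_eq
  refine ⟨?_, fun r hr ↦ ?_, fun r hr hrR ↦ ?_, fun r hrR ↦ ?_, ?_, ?_⟩
  · exact ((contDiffOn_id.inv fun _ hr ↦ ne_of_gt hr).mul
      (contDiff_tangentExtension (contDiff_starInterior ω R) R).contDiffOn).congr hΨ
  · exact hΨ r hr ▸ mul_pos (inv_pos.mpr hr) (starSolution_pos hω hR hr)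
  · rw [hderiv r hr, hmul r hr, deriv_deriv_starSolution_of_lt hω₀ hrR]
  · exact (hderiv r (hR.trans hrR)).trans (deriv_deriv_tangentExtension_of_gt hrR)
  · exact (tendsto_inv_mul_starSolution_atTop hω₀ R).congr'
      (eventually_of_mem (Ioi_mem_atTop 0) fun r hr ↦ (hΨ r hr).symm)
  · exact (tendsto_inv_mul_starSolution_zero hω₀ hR).congr'
      (eventually_of_mem self_mem_nhdsWithin fun r hr ↦ (hΨ r hr).symm)
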